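/- Let a, b be integers with 2 ≤ a < b, let q > b be a prime power, let α be a primitive element of F_q (a generator of the multiplicative group), and let G ∈ F_q^{a×b} be the Vandermonde matrix with entries G_{i,j} = α^{(i−1)(j−1)} for 1 ≤ i ≤ a, 1 ≤ j ≤ b. Then every vector (λ_1,...,λ_a) ∈ ℝ_{≥0}^a with λ_1 + ... + λ_a ≤ b/a belongs to the service rate region Λ(G). -/

import Mathlib

open Matrix

/-- The ν-th column of a matrix. -/
def matCol {F : Type} [Field F] {k n : ℕ} (G : Matrix (Fin k) (Fin n) F) (ν : Fin n) :
    Fin k → F :=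
  fun r => G r ν

/-- `R ⊆ {1,...,n}` is a recovery set for object `i` if `e_i` lies in the span of the
columns of `G` indexed by `R`. -/
def IsRecoverySet {F : Type} [Field F] {k n : ℕ} (G : Matrix (Fin k) (Fin n) F)
    (i : Fin k) (R : Finset (Fin n)) : Prop :=
  Pi.single i (1 : F) ∈ Submodule.span F (matCol G '' (R : Set (Fin n)))

/-- The service rate region `Λ(G)` of the system given by all recovery sets of `G`,
with server capacity `1`: the allocation `x i R` is required to vanish on non-recovery
sets, so all sums effectively range over the recovery sets of each object. -/
def SRRG {F : Type} [Field F] {k n : ℕ} (G : Matrix (Fin k) (Fin n) F) :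
    Set (Fin k → ℝ) :=
  {lam | ∃ x : Fin k → Finset (Fin n) → ℝ,
    (∀ i R, 0 ≤ x i R) ∧
    (∀ i R, ¬ IsRecoverySet G i R → x i R = 0) ∧
    (∀ i, ∑ R : Finset (Fin n), x i R = lam i) ∧
    (∀ ν : Fin n, ∑ i, ∑ R : Finset (Fin n), (if ν ∈ R then x i R else 0) ≤ 1)}

/-!
Since `α` has order `q - 1 ≥ b`, any `a` columns of `G` form a square Vandermonde matrix with
distinct nodes, so every set of `a` servers recovers every object. Splitting each demand equally
among all sets of `a` servers puts the load `(a / b) * ∑ i, lam i` on every server.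
-/

section UniformWeight

open Finset

lemma card_mul_card_filter_mem_powersetCard {α : Type*} [DecidableEq α] {m : ℕ}
    {s : Finset α} {x : α} (hx : x ∈ s) :
    #s * #{R ∈ powersetCard m s | x ∈ R} = m * (#s).choose m := by
  obtain _ | m := m
  · simp [powersetCard_zero, filter_singleton]
  have hcard : #{R ∈ powersetCard (m + 1) s | x ∈ R} = (#s - 1).choose m := by
    simpa using card_filter_powersetCard_subset {x} s (m + 1) (by simpa using hx) (by simp)
  obtain ⟨n, hn⟩ := Nat.exists_eq_add_one.2 (card_pos.2 ⟨x, hx⟩)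
  rw [hcard, hn, Nat.add_sub_cancel, Nat.add_one_mul_choose_eq, mul_comm]

/-- The uniform probability distribution on the subsets of `α` with `m` elements, as a weight on
all subsets of `α`: the share that each set of servers takes of a demand split equally among all
sets of `m` servers. It is identically `0` if `m` exceeds the cardinality of `α`. -/
noncomputable def uniformWeight {α : Type*} [Fintype α] (m : ℕ) (R : Finset α) : ℝ :=
  if #R = m then ((Fintype.card α).choose m : ℝ)⁻¹ else 0

variable {α : Type*} [Fintype α] {m : ℕ}

lemma uniformWeight_nonneg (R : Finset α) : 0 ≤ uniformWeight m R := by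
  unfold uniformWeight
  positivity

lemma uniformWeight_of_card_ne {R : Finset α} (hR : #R ≠ m) : uniformWeight m R = 0 :=
  if_neg hR

lemma sum_filter_uniformWeight (p : Finset α → Prop) [DecidablePred p] :
    ∑ R with p R, uniformWeight m R =
      #{R ∈ powersetCard m (univ : Finset α) | p R} / ((Fintype.card α).choose m : ℝ) := by
  have hfilter : {R ∈ ({R | p R} : Finset (Finset α)) | #R = m} =
      {R ∈ powersetCard m (univ : Finset α) | p R} := by
    ext R
    simp [and_comm]
  simp only [uniformWeight]
  rw [← sum_filter, hfilter, sum_const, nsmul_eq_mul, div_eq_mul_inv]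

lemma sum_uniformWeight (hm : m ≤ Fintype.card α) :
    ∑ R : Finset α, uniformWeight m R = 1 := by
  classical
  have hchoose : ((Fintype.card α).choose m : ℝ) ≠ 0 :=
    Nat.cast_ne_zero.2 (Nat.choose_pos hm).ne'
  simpa [hchoose] using sum_filter_uniformWeight (α := α) (m := m) fun _ ↦ True

lemma sum_filter_mem_uniformWeight [DecidableEq α] (hm : m ≤ Fintype.card α) (x : α) :
    ∑ R with x ∈ R, uniformWeight m R = (m : ℝ) / Fintype.card α := by
  have hchoose : ((Fintype.card α).choose m : ℝ) ≠ 0 :=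
    Nat.cast_ne_zero.2 (Nat.choose_pos hm).ne'
  have hcard : (Fintype.card α : ℝ) ≠ 0 :=
    Nat.cast_ne_zero.2 (Fintype.card_pos_iff.2 ⟨x⟩).ne'
  have hcount := card_mul_card_filter_mem_powersetCard (m := m) (mem_univ x)
  rw [card_univ] at hcount
  rw [sum_filter_uniformWeight, div_eq_div_iff hchoose hcard, mul_comm]
  exact_mod_cast hcount

end UniformWeight

lemma orderOf_eq_card_sub_one_of_forall_eq_pow {M : Type*} [GroupWithZero M] [Fintype M] {α : M}
    (hα0 : α ≠ 0) (hα : ∀ x : M, x ≠ 0 → ∃ m : ℕ, x = α ^ m) :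
    orderOf α = Fintype.card M - 1 := by
  have hpowers (x : Mˣ) : x ∈ Submonoid.powers (Units.mk0 α hα0) := by
    obtain ⟨m, hm⟩ := hα x x.ne_zero
    exact ⟨m, Units.ext (by simp [hm])⟩
  rw [← Units.val_mk0 hα0, orderOf_units, orderOf_eq_card_of_forall_mem_powers hpowers,
    Nat.card_units, Nat.card_eq_fintype_card]

lemma injective_pow_fin {M : Type*} [Monoid M] {x : M} {n : ℕ} (hn : n ≤ orderOf x) :
    Function.Injective fun j : Fin n ↦ x ^ (j : ℕ) := fun i j hij ↦
  Fin.ext (pow_injOn_Iio_orderOf (i.isLt.trans_le hn) (j.isLt.trans_le hn) hij)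

section ServiceRateRegion

variable {F : Type} [Field F] {k n : ℕ} {G : Matrix (Fin k) (Fin n) F}

lemma mem_SRRG_of_forall_card_isRecoverySet {m : ℕ} (hm : m ≤ n)
    (hrec : ∀ i (R : Finset (Fin n)), R.card = m → IsRecoverySet G i R)
    {lam : Fin k → ℝ} (hpos : ∀ i, 0 ≤ lam i) (hsum : m * ∑ i, lam i ≤ n) : lam ∈ SRRG G := by
  rw [← Fintype.card_fin n] at hm
  refine ⟨fun i R ↦ lam i * uniformWeight m R, fun i R ↦ ?_, fun i R hR ↦ ?_, fun i ↦ ?_,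
    fun ν ↦ ?_⟩
  · exact mul_nonneg (hpos i) (uniformWeight_nonneg R)
  · exact mul_eq_zero_of_right _ (uniformWeight_of_card_ne (mt (hrec i R) hR))
  · rw [← Finset.mul_sum, sum_uniformWeight hm, mul_one]
  · calc ∑ i, ∑ R : Finset (Fin n), (if ν ∈ R then lam i * uniformWeight m R else 0)
        = ∑ i, lam i * ((m : ℝ) / n) := by
          simp only [← Finset.sum_filter, ← Finset.mul_sum, sum_filter_mem_uniformWeight hm,
            Fintype.card_fin]
      _ = m * (∑ i, lam i) / n := by rw [← Finset.sum_mul]; ring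
      _ ≤ 1 := div_le_one_of_le₀ hsum n.cast_nonneg

/-- `G` generates a maximum distance separable (MDS) code: any `k` of its columns are linearly
independent, where `k` is the number of rows, so that any `k` servers recover every object. The
condition is vacuous if `G` has fewer than `k` columns. -/
def IsMDS (G : Matrix (Fin k) (Fin n) F) : Prop :=
  ∀ R : Finset (Fin n), R.card = k → LinearIndepOn F (matCol G) (R : Set (Fin n))

lemma IsMDS.isRecoverySet (hG : IsMDS G) (i : Fin k) {R : Finset (Fin n)} (hR : R.card = k) :
    IsRecoverySet G i R := by
  have hspan := (hG R hR).linearIndependent.span_eq_top_of_card_eq_finrank' (by simp [hR])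
  rw [IsRecoverySet, Set.image_eq_range, hspan]
  exact Submodule.mem_top

lemma isMDS_transpose_rectVandermonde {v : Fin n → F} (hv : Function.Injective v) :
    IsMDS (rectVandermonde v 1 k)ᵀ := by
  intro R hR
  let e : Fin k ≃ R := (R.equivFinOfCardEq hR).symm
  have hdet : (vandermonde fun j ↦ v (e j)).det ≠ 0 :=
    det_vandermonde_ne_zero_iff.2 (hv.comp (Subtype.val_injective.comp e.injective))
  have hcols : (fun x : R ↦ matCol (rectVandermonde v 1 k)ᵀ x) ∘ e =
      (vandermonde fun j ↦ v (e j)).row := by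
    ext j i
    simp [matCol, rectVandermonde_apply, vandermonde_apply]
  refine (linearIndependent_equiv e).1 ?_
  exact hcols ▸ linearIndependent_rows_of_det_ne_zero hdet

lemma isMDS_of_forall_eq_pow_mul {α : F} (hn : n ≤ orderOf α)
    (hG : ∀ (i : Fin k) (j : Fin n), G i j = α ^ ((i : ℕ) * (j : ℕ))) : IsMDS G := by
  have hGeq : G = (rectVandermonde (fun j : Fin n ↦ α ^ (j : ℕ)) 1 k)ᵀ := by
    ext i j
    simp [hG, rectVandermonde_apply, ← pow_mul, mul_comm]
  exact hGeq ▸ isMDS_transpose_rectVandermonde (injective_pow_fin hn)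

end ServiceRateRegion

theorem stmt18_general {F : Type} [Field F] {k n : ℕ} (hk : 0 < k) (hkn : k ≤ n)
    {G : Matrix (Fin k) (Fin n) F} (hG : IsMDS G) {lam : Fin k → ℝ}
    (hpos : ∀ i, 0 ≤ lam i) (hsum : ∑ i, lam i ≤ (n : ℝ) / k) : lam ∈ SRRG G :=
  mem_SRRG_of_forall_card_isRecoverySet hkn (fun i _ ↦ hG.isRecoverySet i) hpos
    ((le_div_iff₀' (Nat.cast_pos.2 hk)).1 hsum)

theorem stmt18 {F : Type} [Field F] [Fintype F] {a b : ℕ}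
    (ha : 2 ≤ a) (hab : a < b)
    -- `q > b`, where `q` is the size of the field
    (hq : b < Fintype.card F)
    -- `α` is a primitive element of `F`: a generator of the multiplicative group
    (α : F) (hα0 : α ≠ 0) (hα : ∀ x : F, x ≠ 0 → ∃ m : ℕ, x = α ^ m)
    -- `G` is the Vandermonde matrix with `G_{i,j} = α^{(i-1)(j-1)}` (0-indexed here)
    (G : Matrix (Fin a) (Fin b) F)
    (hG : ∀ (i : Fin a) (j : Fin b), G i j = α ^ ((i : ℕ) * (j : ℕ)))
    (lam : Fin a → ℝ) (hpos : ∀ i, 0 ≤ lam i)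
    (hsum : ∑ i, lam i ≤ (b : ℝ) / (a : ℝ)) :
    lam ∈ SRRG G := by
  have hb : b ≤ orderOf α :=
    orderOf_eq_card_sub_one_of_forall_eq_pow hα0 hα ▸ Nat.le_sub_one_of_lt hq
  exact stmt18_general (by omega) hab.le (isMDS_of_forall_eq_pow_mul hb hG) hpos hsum
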